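/- For f ∈ H_w and fixed t ≥ 0, define g(x) = f(t∧x) and g̃(x) = 1_{t≤x}(f(x) - f(t)). Then g, g̃ ∈ H_w, f = g + g̃, g and g̃ are orthogonal in H_w, and ‖f‖²_w = ‖g‖²_w + ‖g̃‖²_w. -/

import Mathlib

open MeasureTheory Set Filter Real
open scoped RealInnerProductSpace

/-- for `f ∈ H_w` and fixed `t ≥ 0`, the functions `g(x) = f(t∧x)` and
`g̃(x) = 1_{t≤x}(f(x) − f(t))` belong to `H_w`, satisfy `f = g + g̃`, are orthogonal in `H_w`,
and `‖f‖²_w = ‖g‖²_w + ‖g̃‖²_w`.  Here `g` has derivative `g'(x) = 1_{x<t} f'(x)` and `g̃` has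
derivative `g̃'(x) = 1_{t≤x} f'(x)`. -/
theorem stmt_5 {U : Type*} [NormedAddCommGroup U] [InnerProductSpace ℝ U]
    [CompleteSpace U] [SecondCountableTopology U]
    (w : ℝ → ℝ) (hw_cont : Continuous w) (hw_mono : MonotoneOn w (Ici 0))
    (hw0 : w 0 = 1)
    (hw_inv : IntegrableOn (fun s => (w s)⁻¹) (Ioi 0))
    (t : ℝ) (ht : 0 ≤ t)
    (f f' : ℝ → U)
    (hf_loc : ∀ y ∈ Ici (0:ℝ), IntervalIntegrable f' volume 0 y)
    (hf_ac : ∀ y ∈ Ici (0:ℝ), f y = f 0 + ∫ s in (0:ℝ)..y, f' s)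
    (hf_w : IntegrableOn (fun y => w y * ‖f' y‖ ^ 2) (Ioi 0)) :
    -- f = g + g̃ pointwise
    (∀ x : ℝ, f x = f (min t x) + (if t ≤ x then f x - f t else 0)) ∧
    -- g ∈ H_w with derivative g'
    ((∀ y ∈ Ici (0:ℝ), IntervalIntegrable (fun x => if x < t then f' x else 0) volume 0 y) ∧
      (∀ y ∈ Ici (0:ℝ), f (min t y)
        = f (min t 0) + ∫ s in (0:ℝ)..y, (if s < t then f' s else 0)) ∧
      IntegrableOn (fun y => w y * ‖if y < t then f' y else 0‖ ^ 2) (Ioi 0)) ∧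
    -- g̃ ∈ H_w with derivative g̃'
    ((∀ y ∈ Ici (0:ℝ), IntervalIntegrable (fun x => if t ≤ x then f' x else 0) volume 0 y) ∧
      (∀ y ∈ Ici (0:ℝ), (if t ≤ y then f y - f t else 0)
        = (if t ≤ (0:ℝ) then f 0 - f t else 0)
          + ∫ s in (0:ℝ)..y, (if t ≤ s then f' s else 0)) ∧
      IntegrableOn (fun y => w y * ‖if t ≤ y then f' y else 0‖ ^ 2) (Ioi 0)) ∧
    -- g ⟂ g̃ in the H_w inner product
    (⟪f (min t 0), (if t ≤ (0:ℝ) then f 0 - f t else 0)⟫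
      + ∫ x in Ioi (0:ℝ),
          w x * ⟪(if x < t then f' x else 0), (if t ≤ x then f' x else 0)⟫ = 0) ∧
    -- ‖f‖²_w = ‖g‖²_w + ‖g̃‖²_w
    (‖f 0‖ ^ 2 + ∫ x in Ioi (0:ℝ), w x * ‖f' x‖ ^ 2
      = (‖f (min t 0)‖ ^ 2 + ∫ x in Ioi (0:ℝ), w x * ‖if x < t then f' x else 0‖ ^ 2)
        + (‖if t ≤ (0:ℝ) then f 0 - f t else 0‖ ^ 2
            + ∫ x in Ioi (0:ℝ), w x * ‖if t ≤ x then f' x else 0‖ ^ 2)) := by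
  have hI1 : ∀ y ∈ Ici (0:ℝ),
      IntervalIntegrable (fun x => if x < t then f' x else 0) volume 0 y := by
    intro y hy
    have h := hf_loc y hy
    rw [intervalIntegrable_iff] at h ⊢
    exact h.indicator (measurableSet_Iio (a := t))
  have hI2 : ∀ y ∈ Ici (0:ℝ),
      IntervalIntegrable (fun x => if t ≤ x then f' x else 0) volume 0 y := by
    intro y hy
    have h := hf_loc y hy
    rw [intervalIntegrable_iff] at h ⊢
    exact h.indicator (measurableSet_Ici (a := t))
  have hE : ∀ y ∈ Ici (0:ℝ), ∫ s in (0:ℝ)..y, (if s < t then f' s else 0)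
      = ∫ s in (0:ℝ)..(min t y), f' s := by
    intro y hy
    have hy' : (0:ℝ) ≤ y := hy
    rw [intervalIntegral.integral_of_le hy', intervalIntegral.integral_of_le (le_min ht hy')]
    have h1 : ∫ s in Ioc 0 y, (if s < t then f' s else 0)
        = ∫ s in Ioc 0 y, (Iic t).indicator f' s := by
      apply integral_congr_ae
      have h0 : ∀ᵐ s ∂(volume.restrict (Ioc 0 y)), s ≠ t := Measure.ae_ne _ t
      filter_upwards [h0] with s hs
      by_cases h : s < t
      · simp [h, h.le]
      · have : ¬ s ≤ t := fun h' => h (lt_of_le_of_ne h' hs)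
        simp [h, this]
    rw [h1, setIntegral_indicator measurableSet_Iic]
    congr 2
    ext s
    simp only [mem_inter_iff, mem_Ioc, mem_Iic, le_min_iff]
    tauto
  have hS : ∀ y ∈ Ici (0:ℝ), ∫ s in (0:ℝ)..y, f' s
      = (∫ s in (0:ℝ)..y, (if s < t then f' s else 0))
        + ∫ s in (0:ℝ)..y, (if t ≤ s then f' s else 0) := by
    intro y hy
    rw [← intervalIntegral.integral_add (hI1 y hy) (hI2 y hy)]
    congr 1
    ext s
    by_cases h : s < t
    · simp [h, not_le.2 h]
    · simp [h, not_lt.1 h]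
  have hW1 : IntegrableOn (fun y => w y * ‖if y < t then f' y else 0‖ ^ 2) (Ioi 0) := by
    have h := Integrable.indicator hf_w (measurableSet_Iio (a := t))
    refine h.congr (Eventually.of_forall fun s => ?_)
    by_cases h : s < t <;> simp [h]
  have hW2 : IntegrableOn (fun y => w y * ‖if t ≤ y then f' y else 0‖ ^ 2) (Ioi 0) := by
    have h := Integrable.indicator hf_w (measurableSet_Ici (a := t))
    refine h.congr (Eventually.of_forall fun s => ?_)
    by_cases h : t ≤ s <;> simp [h]
  have h00 : (if t ≤ (0:ℝ) then f 0 - f t else 0) = 0 := by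
    split_ifs with h
    · rw [le_antisymm h ht, sub_self]
    · rfl
  rw [h00, min_eq_right ht]
  refine ⟨?_, ⟨hI1, ?_, hW1⟩, ⟨hI2, ?_, hW2⟩, ?_, ?_⟩
  · intro x
    by_cases h : t ≤ x
    · simp [h]
    · simp [h, (not_le.1 h).le]
  · intro y hy
    rw [hE y hy]
    exact hf_ac _ (le_min ht hy)
  · intro y hy
    have h1 := hS y hy
    rw [hE y hy] at h1
    have h2 := hf_ac y hy
    have h3 := hf_ac (min t y) (le_min ht hy)
    have h4 : f y = f (min t y) + ∫ s in (0:ℝ)..y, (if t ≤ s then f' s else 0) := by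
      rw [h2, h1, h3, add_assoc]
    rw [zero_add]
    by_cases h : t ≤ y
    · rw [min_eq_left h] at h4
      rw [if_pos h, sub_eq_iff_eq_add']
      exact h4
    · rw [min_eq_right (not_le.1 h).le] at h4
      rw [if_neg h]
      exact (left_eq_add.1 h4).symm
  · rw [inner_zero_right, zero_add]
    refine integral_eq_zero_of_ae (Eventually.of_forall fun s => ?_)
    by_cases h : s < t
    · simp [not_le.2 h]
    · simp [h]
  · have : ∫ x in Ioi (0:ℝ), w x * ‖f' x‖ ^ 2
        = (∫ x in Ioi (0:ℝ), w x * ‖if x < t then f' x else 0‖ ^ 2)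
          + ∫ x in Ioi (0:ℝ), w x * ‖if t ≤ x then f' x else 0‖ ^ 2 := by
      rw [← integral_add hW1 hW2]
      congr 1
      ext s
      by_cases h : s < t
      · simp [h, not_le.2 h]
      · simp [h, not_lt.1 h]
    rw [this, norm_zero]
    ring
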